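/- arXiv:2306.00278 — 2 statements merged into one kernel-verified Lean document; each statement's English description precedes it below -/
import Mathlib

section
/- (Rademacher–Menshov numerical inequality.) For all k, m ∈ ℕ with k < 2^m and every sequence of complex numbers (a_n)_{n∈ℕ}: sup_{k ≤ n ≤ 2^m} |a_n| ≤ |a_k| + √2 · Σ_{i=0}^{m} ( Σ_{j} |a_{(j+1)2^i} − a_{j2^i}|² )^{1/2}, where for each i the inner sum is over those j ∈ {0,…,2^{m−i}−1} for which the dyadic interval [j2^i, (j+1)2^i) is contained in [k, 2^m]. -/
/-!
Round `k` up and `n` down to even numbers `2u` and `2v`. This splits `a n - a k` into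
`a (2v) - a (2u)` and at most two unit increments, one at each end of `[k, n)`; since these two are
distinct, Cauchy–Schwarz bounds them by `√2` times the `ℓ²` norm of all unit increments. The
remaining difference is of the same kind for the sequence `j ↦ a (2j)` on `[u, v)`, whose dyadic
increments at scale `i` are those of `a` at scale `i + 1`, so one iterates over the scales.
-/

theorem add_le_sqrt_two_mul_sqrt_add_sq (x y : ℝ) : x + y ≤ √2 * √(x ^ 2 + y ^ 2) := by
  rw [← Real.sqrt_mul zero_le_two]
  exact Real.le_sqrt_of_sq_le add_sq_le

theorem mem_Ico_ceilDiv_two_pow {k n i j : ℕ} :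
    j ∈ Finset.Ico (k ⌈/⌉ 2 ^ i) (n / 2 ^ i) ↔ k ≤ j * 2 ^ i ∧ (j + 1) * 2 ^ i ≤ n := by
  have hpos : 0 < 2 ^ i := Nat.two_pow_pos i
  rw [Finset.mem_Ico, ceilDiv_le_iff_le_mul hpos, mul_comm, ← Nat.succ_le_iff,
    Nat.le_div_iff_mul_le hpos]

section SeminormedAddCommGroup

variable {E : Type*} [SeminormedAddCommGroup E]

/-- The `ℓ²` norm of the increments of `a` over the dyadic intervals `[j * 2 ^ i, (j + 1) * 2 ^ i)`
of length `2 ^ i` contained in `[k, n)`, i.e. those with `⌈k / 2 ^ i⌉ ≤ j < ⌊n / 2 ^ i⌋`. It is one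
term of the sum over scales in the Rademacher–Menshov inequality. -/
noncomputable def dyadicIncrementNorm (a : ℕ → E) (k n i : ℕ) : ℝ :=
  √(∑ j ∈ Finset.Ico (k ⌈/⌉ 2 ^ i) (n / 2 ^ i), ‖a ((j + 1) * 2 ^ i) - a (j * 2 ^ i)‖ ^ 2)

theorem dyadicIncrementNorm_zero (a : ℕ → E) (k n : ℕ) :
    dyadicIncrementNorm a k n 0 = √(∑ j ∈ Finset.Ico k n, ‖a (j + 1) - a j‖ ^ 2) := by
  simp [dyadicIncrementNorm]

theorem dyadicIncrementNorm_succ (a : ℕ → E) (k n i : ℕ) :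
    dyadicIncrementNorm a k n (i + 1) =
      dyadicIncrementNorm (fun j ↦ a (2 * j)) ((k + 1) / 2) (n / 2) i := by
  have hscale (j : ℕ) : 2 * (j * 2 ^ i) = j * 2 ^ (i + 1) := by ring
  have hIco : Finset.Ico (k ⌈/⌉ 2 ^ (i + 1)) (n / 2 ^ (i + 1)) =
      Finset.Ico (((k + 1) / 2) ⌈/⌉ 2 ^ i) (n / 2 / 2 ^ i) := by
    ext j
    simp only [mem_Ico_ceilDiv_two_pow, ← hscale]
    omega
  simp only [dyadicIncrementNorm, hIco, hscale]

theorem dyadicIncrementNorm_le_sqrt_sum_filter (a : ℕ → E) (k : ℕ) {n i m : ℕ} (hn : n ≤ 2 ^ m)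
    (hi : i ≤ m) :
    dyadicIncrementNorm a k n i ≤
      √(∑ j ∈ (Finset.range (2 ^ (m - i))).filter
          (fun j ↦ k ≤ j * 2 ^ i ∧ (j + 1) * 2 ^ i ≤ 2 ^ m),
        ‖a ((j + 1) * 2 ^ i) - a (j * 2 ^ i)‖ ^ 2) := by
  unfold dyadicIncrementNorm
  gcongr
  intro j hj
  obtain ⟨hkj, hjn⟩ := mem_Ico_ceilDiv_two_pow.1 hj
  have hjm : (j + 1) * 2 ^ i ≤ 2 ^ m := hjn.trans hn
  have hjrange : j + 1 ≤ 2 ^ (m - i) := by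
    rw [← Nat.pow_sub_mul_pow 2 hi] at hjm
    exact Nat.le_of_mul_le_mul_right hjm (Nat.two_pow_pos i)
  exact Finset.mem_filter.2 ⟨Finset.mem_range.2 hjrange, hkj, hjm⟩

theorem sq_norm_sub_eq_sum_Ico (a : ℕ → E) {p q : ℕ} (hpq : p ≤ q) (hqp : q ≤ p + 1) :
    ‖a q - a p‖ ^ 2 = ∑ j ∈ Finset.Ico p q, ‖a (j + 1) - a j‖ ^ 2 := by
  obtain rfl | rfl : q = p ∨ q = p + 1 := by omega
  all_goals simp

theorem norm_sub_add_norm_sub_le_sqrt_two_mul (a : ℕ → E) {k p q n : ℕ} (hkp : k ≤ p)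
    (hpk : p ≤ k + 1) (hpq : p ≤ q) (hqn : q ≤ n) (hnq : n ≤ q + 1) :
    ‖a p - a k‖ + ‖a n - a q‖ ≤ √2 * √(∑ j ∈ Finset.Ico k n, ‖a (j + 1) - a j‖ ^ 2) := by
  refine (add_le_sqrt_two_mul_sqrt_add_sq _ _).trans ?_
  gcongr
  rw [sq_norm_sub_eq_sum_Ico a hkp hpk, sq_norm_sub_eq_sum_Ico a hqn hnq,
    ← Finset.sum_Ico_consecutive _ (hkp.trans hpq) hqn, ← Finset.sum_Ico_consecutive _ hkp hpq]
  gcongr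
  exact le_add_of_nonneg_right (Finset.sum_nonneg fun _ _ ↦ sq_nonneg _)

theorem norm_sub_le_norm_sub_even_add (a : ℕ → E) {k n : ℕ} (hkn : k < n) :
    ‖a n - a k‖ ≤ ‖a (2 * (n / 2)) - a (2 * ((k + 1) / 2))‖ +
      √2 * dyadicIncrementNorm a k n 0 := by
  set p := 2 * ((k + 1) / 2)
  set q := 2 * (n / 2)
  have hends : ‖a p - a k‖ + ‖a n - a q‖ ≤ √2 * dyadicIncrementNorm a k n 0 := by
    rw [dyadicIncrementNorm_zero]
    apply norm_sub_add_norm_sub_le_sqrt_two_mul <;> omega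
  calc ‖a n - a k‖
    _ ≤ ‖a n - a q‖ + ‖a q - a k‖ := norm_sub_le_norm_sub_add_norm_sub ..
    _ ≤ ‖a n - a q‖ + (‖a q - a p‖ + ‖a p - a k‖) := by
      gcongr
      exact norm_sub_le_norm_sub_add_norm_sub ..
    _ = ‖a q - a p‖ + (‖a p - a k‖ + ‖a n - a q‖) := by ring
    _ ≤ ‖a q - a p‖ + √2 * dyadicIncrementNorm a k n 0 := by gcongr

theorem rademacher_menshov_inequality_general (a : ℕ → E) {k n m : ℕ} (hkn : k ≤ n)
    (hnk : n < k + 2 ^ m) :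
    ‖a n - a k‖ ≤ √2 * ∑ i ∈ Finset.range m, dyadicIncrementNorm a k n i := by
  induction m generalizing a k n with
  | zero =>
    obtain rfl : n = k := by omega
    simp
  | succ m ih =>
    obtain rfl | hlt := hkn.eq_or_lt
    · rw [sub_self, norm_zero]
      exact mul_nonneg (Real.sqrt_nonneg 2) (Finset.sum_nonneg fun _ _ ↦ Real.sqrt_nonneg _)
    have hcoarse : ‖a (2 * (n / 2)) - a (2 * ((k + 1) / 2))‖ ≤
        √2 * ∑ i ∈ Finset.range m, dyadicIncrementNorm a k n (i + 1) := by
      simp only [dyadicIncrementNorm_succ]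
      exact ih (fun j ↦ a (2 * j)) (by omega) (by omega)
    rw [Finset.sum_range_succ', mul_add]
    exact (norm_sub_le_norm_sub_even_add a hlt).trans (by gcongr)

end SeminormedAddCommGroup

/-- Proposition 2.1, Rademacher–Menshov numerical inequality:
for `k < 2^m` and any sequence of complex numbers `(a_n)`,
`sup_{k ≤ n ≤ 2^m} |a_n| ≤ |a_k| + √2 ∑_{i=0}^{m} (∑_j |a_{(j+1)2^i} - a_{j2^i}|²)^{1/2}`,
where for each `i` the inner sum runs over those `j ∈ {0, …, 2^{m-i}-1}` for which the
dyadic interval `[j2^i, (j+1)2^i)` is contained in `[k, 2^m]`. -/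
theorem rademacher_menshov_inequality
    (k m : ℕ) (hk : k < 2 ^ m) (a : ℕ → ℂ) :
    ∀ n : ℕ, k ≤ n → n ≤ 2 ^ m →
      ‖a n‖ ≤ ‖a k‖ + Real.sqrt 2 *
        ∑ i ∈ Finset.range (m + 1),
          Real.sqrt (∑ j ∈ (Finset.range (2 ^ (m - i))).filter
              (fun j => k ≤ j * 2 ^ i ∧ (j + 1) * 2 ^ i ≤ 2 ^ m),
            ‖a ((j + 1) * 2 ^ i) - a (j * 2 ^ i)‖ ^ 2) := by
  intro n hkn hn
  have hnk : n < k + 2 ^ (m + 1) := by grind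
  grw [norm_le_norm_add_norm_sub' (a n) (a k), rademacher_menshov_inequality_general a hkn hnk]
  gcongr with i hi
  exact dyadicIncrementNorm_le_sqrt_sum_filter a k hn (Finset.mem_range_succ_iff.1 hi)
end

section
/- (Gaussian sum estimate.) Let k ∈ ℕ, let Γ ⊆ ℕ_0^k∖{0} be a nonempty finite set, and let k', k'' ∈ {0,…,k} with k' + k'' = k. There exists δ > 0 such that for all q ∈ ℕ and a ∈ ℕ_q^Γ with gcd(a,q) = 1, the Gaussian sum G(a/q) := q^{−k'} φ(q)^{−k''} Σ_{x∈ℕ_q^{k'}} Σ_{y∈A_q^{k''}} e((a/q)·𝒬(x,y)) satisfies |G(a/q)| ≲ q^{−δ}. -/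
open scoped ENNReal NNReal

noncomputable section

/-- `e(x) = e^{2πix}`. -/
def eC (x : ℝ) : ℂ := Complex.exp (2 * Real.pi * Complex.I * x)

/-- The Gaussian sum `G(a/q)` associated with the canonical polynomial mapping
`𝒬(x) = (x^γ : γ ∈ Γ)`:
`G(a/q) = q^{-k'} φ(q)^{-k''} ∑_{x ∈ ℕ_q^{k'}} ∑_{y ∈ A_q^{k''}} e((a/q)·𝒬(x,y))`,
where the first `k'` coordinates range over `ℕ_q = {1,…,q}` and the last `k''`
coordinates range over `A_q = {m ∈ ℕ_q : gcd(m,q) = 1}`. -/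
def gaussSumQ {k : ℕ} (Γ : Finset (Fin k → ℕ)) (k' k'' : ℕ) (q : ℕ)
    (a : (Fin k → ℕ) → ℕ) : ℂ :=
  ((q : ℂ) ^ k' * (Nat.totient q : ℂ) ^ k'')⁻¹ *
    ∑ v ∈ Fintype.piFinset (fun i : Fin k =>
        if (i : ℕ) < k' then Finset.Icc 1 q
        else (Finset.Icc 1 q).filter fun m => Nat.Coprime m q),
      eC (∑ γ ∈ Γ, ((a γ : ℝ) / (q : ℝ)) * ∏ i, (v i : ℝ) ^ (γ i))

end

/-!
Weyl differencing is run on an arbitrary finite abelian group `G`, for phases `f : G → ℤ/q`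
that are polynomial maps of degree at most `d`, and the saving is measured by the order `Q` of `f`
modulo constants. Viewing differences as polynomials in the operator `Δ_[h]`, periodicity of `f`
becomes an ideal membership in `ℤ[X]`. This gives the key divisibility: if `∑ x, e(f x / q)` does
not vanish, then `Q ∣ (t ^ (d - 1) * I) ^ d`, where `I` is the index of the subgroup of those `h`
for which `t • Δ_[h] f` is constant. So only few increments `h` have a difference of small order
`t`, and induction on `d` bounds the sum by `|G| * Q ^ (-δ)` up to a constant.

For a polynomial with coprime coefficients, interpolation at `0, …, D` (a Vandermonde system) shows
that `Q` is at least a constant times `q`. Möbius inversion writes the restriction to units as a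
combination of complete sums of dilated polynomials, for which `Q` drops only by a power of the
dilation factors.
-/

open Finset fwdDiff

section DivisorBound

lemma add_one_le_mul_pow {b : ℝ} (hb : 1 < b) (n : ℕ) : (n : ℝ) + 1 ≤ b / (b - 1) * b ^ n := by
  have hb' : 0 < b - 1 := sub_pos.2 hb
  calc (n : ℝ) + 1 ≤ n * b + b / (b - 1) :=
        add_le_add (le_mul_of_one_le_right n.cast_nonneg hb.le) ((one_le_div hb').2 (by linarith))
    _ = b / (b - 1) * (1 + n * (b - 1)) := by field_simp; ring
    _ ≤ b / (b - 1) * b ^ n := by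
        gcongr
        exact one_add_mul_sub_le_pow (by linarith) n

lemma add_one_le_pow {b : ℝ} (hb : 2 ≤ b) (n : ℕ) : (n : ℝ) + 1 ≤ b ^ n :=
  calc (n : ℝ) + 1 ≤ 1 + n * (b - 1) := by nlinarith [n.cast_nonneg (α := ℝ)]
    _ ≤ b ^ n := one_add_mul_sub_le_pow (by linarith) n

lemma rpow_eq_prod_primeFactors {n : ℕ} (hn : n ≠ 0) (ε : ℝ) :
    (n : ℝ) ^ ε = ∏ p ∈ n.primeFactors, ((p : ℝ) ^ ε) ^ n.factorization p := by
  conv_lhs => rw [← Nat.prod_factorization_pow_eq_self hn, Finsupp.prod, Nat.support_factorization]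
  push_cast
  rw [← Real.finsetProd_rpow _ _ fun p _ ↦ by positivity]
  exact prod_congr rfl fun p _ ↦ Real.rpow_pow_comm p.cast_nonneg _ _ |>.symm

theorem exists_card_divisors_le {ε : ℝ} (hε : 0 < ε) :
    ∃ K : ℝ, 1 ≤ K ∧ ∀ n : ℕ, n ≠ 0 → (#n.divisors : ℝ) ≤ K * (n : ℝ) ^ ε := by
  set b : ℝ := 2 ^ ε
  have hb : 1 < b := Real.one_lt_rpow one_lt_two hε
  set K := b / (b - 1)
  have hK : 1 ≤ K := (one_le_div (sub_pos.2 hb)).2 (by linarith)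
  obtain ⟨M, hM⟩ := exists_nat_ge ((2 : ℝ) ^ ε⁻¹)
  have prime_power_bound (p e : ℕ) (hp : 2 ≤ p) :
      (e : ℝ) + 1 ≤ (if p < M then K else 1) * ((p : ℝ) ^ ε) ^ e := by
    split_ifs with hpM
    · refine (add_one_le_mul_pow hb e).trans ?_
      have hbp : b ≤ (p : ℝ) ^ ε := Real.rpow_le_rpow two_pos.le (mod_cast hp) hε.le
      gcongr
    · rw [one_mul]
      refine add_one_le_pow ?_ e
      rw [not_lt] at hpM
      exact (Real.rpow_inv_le_iff_of_pos two_pos.le p.cast_nonneg hε).1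
        (hM.trans (mod_cast hpM))
  refine ⟨K ^ M, one_le_pow₀ hK, fun n hn ↦ ?_⟩
  rw [Nat.card_divisors hn, rpow_eq_prod_primeFactors hn]
  push_cast
  calc ∏ p ∈ n.primeFactors, ((n.factorization p : ℝ) + 1)
      ≤ ∏ p ∈ n.primeFactors, (if p < M then K else 1) * ((p : ℝ) ^ ε) ^ n.factorization p :=
        prod_le_prod (fun _ _ ↦ by positivity) fun p hp ↦
          prime_power_bound p _ (Nat.prime_of_mem_primeFactors hp).two_le
    _ = K ^ #{p ∈ n.primeFactors | p < M} *
          ∏ p ∈ n.primeFactors, ((p : ℝ) ^ ε) ^ n.factorization p := by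
        rw [prod_mul_distrib, prod_ite, prod_const, prod_const_one, mul_one]
    _ ≤ K ^ M * ∏ p ∈ n.primeFactors, ((p : ℝ) ^ ε) ^ n.factorization p := by
        gcongr
        calc #{p ∈ n.primeFactors | p < M} ≤ #(range M) :=
              card_le_card fun p hp ↦ mem_range.2 (mem_filter.1 hp).2
          _ = M := card_range M

lemma exists_card_divisors_pow_le (k : ℕ) {ε : ℝ} (hε : 0 < ε) :
    ∃ K : ℝ, 0 < K ∧ ∀ n : ℕ, n ≠ 0 → ∀ j ≤ k, (#n.divisors : ℝ) ^ j ≤ K * (n : ℝ) ^ ε := by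
  obtain ⟨K, hK, hdivisors⟩ := exists_card_divisors_le (ε := ε / (k + 1)) (by positivity)
  refine ⟨K ^ k, by positivity, fun n hn j hj ↦ ?_⟩
  have one_le_card : (1 : ℝ) ≤ #n.divisors := mod_cast card_pos.2 ⟨1, Nat.one_mem_divisors.2 hn⟩
  have exponent_le : ε / (k + 1) * k ≤ ε := by
    rw [div_mul_eq_mul_div, div_le_iff₀ (by positivity)]
    linarith
  calc (#n.divisors : ℝ) ^ j ≤ #n.divisors ^ k := pow_le_pow_right₀ one_le_card hj
    _ ≤ (K * (n : ℝ) ^ (ε / (k + 1))) ^ k := by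
        gcongr
        exact hdivisors n hn
    _ = K ^ k * (n : ℝ) ^ (ε / (k + 1) * k) := by
        rw [mul_pow, ← Real.rpow_mul_natCast n.cast_nonneg]
    _ ≤ K ^ k * (n : ℝ) ^ ε := by
        gcongr
        exact mod_cast Nat.one_le_iff_ne_zero.2 hn

lemma le_card_divisors_mul_totient (n : ℕ) : n ≤ #n.divisors * n.totient := by
  rcases n.eq_zero_or_pos with rfl | hn
  · exact Nat.zero_le _
  calc n = ∑ d ∈ n.divisors, d.totient := (Nat.sum_totient n).symm
    _ ≤ #n.divisors * n.totient := sum_le_card_nsmul _ _ _ fun d hd ↦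
        Nat.le_of_dvd (Nat.totient_pos.2 hn) (Nat.totient_dvd_of_dvd (Nat.dvd_of_mem_divisors hd))

end DivisorBound

section PeriodicDifferences

lemma pow_mul_mem_span_one_add_pow_sub_one {R : Type*} [CommRing R] (x : R) (r d : ℕ) :
    (r : R) ^ d * x ∈ Ideal.span {(1 + x) ^ r - 1, x ^ (d + 1)} := by
  obtain ⟨z, hz⟩ := Polynomial.powAddExpansion 1 x r
  simp only [Ideal.mem_span_pair]
  induction d with
  | zero => exact ⟨0, 1, by simp⟩
  | succ d ih =>
    obtain ⟨a, b, hab⟩ := ih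
    refine ⟨r * a + b * x ^ d, -b * z, ?_⟩
    simp only [one_pow, mul_one] at hz
    linear_combination r * hab + b * x ^ d * hz

lemma one_add_pow_pow_sub_one_mem_span {R : Type*} [CommRing R] (x : R) (t d : ℕ) :
    (1 + x) ^ t ^ d - 1 ∈ Ideal.span {t * x, x ^ (d + 1)} := by
  simp only [Ideal.mem_span_pair]
  induction d with
  | zero => exact ⟨0, 1, by simp⟩
  | succ d ih =>
    obtain ⟨a, b, hab⟩ := ih
    obtain ⟨z, hz⟩ := Polynomial.powAddExpansion 1 ((1 + x) ^ t ^ d - 1) t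
    set y := (1 + x) ^ t ^ d - 1
    have hy : (1 + x) ^ t ^ d = 1 + y := by ring
    refine ⟨a * t + b * x ^ d + z * a * (y + b * x ^ (d + 1)), z * b ^ 2 * x ^ d, ?_⟩
    rw [pow_succ t, pow_mul, hy, hz]
    simp only [one_pow, ← hab]
    ring

variable {G A : Type*} [AddCommGroup G] [AddCommGroup A]

open fwdDiff_aux Polynomial

lemma aeval_fwdDiff_one_add_X_pow_sub_one (h : G) (r : ℕ) (f : G → A) :
    aeval (fwdDiffₗ G A h) ((1 + X : ℤ[X]) ^ r - 1) f = Δ_[r • h] f := by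
  have hshift : aeval (fwdDiffₗ G A h) (1 + X : ℤ[X]) = shiftₗ G A h := by
    simp [shiftₗ, add_comm]
  ext x
  rw [map_sub, map_pow, map_one, hshift, LinearMap.sub_apply, Pi.sub_apply, shiftₗ_pow_apply,
    Module.End.one_apply, fwdDiff]

lemma aeval_fwdDiff_X_pow (h : G) (n : ℕ) (f : G → A) :
    aeval (fwdDiffₗ G A h) (X ^ n : ℤ[X]) f = (Δ_[h])^[n] f := by
  rw [map_pow, aeval_X, ← coe_fwdDiffₗ_pow]

lemma aeval_apply_eq_zero_of_mem_span_pair {R M : Type*} [CommRing R] [AddCommGroup M] [Module R M]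
    {T : Module.End R M} {v : M} {p a b : R[X]} (hp : p ∈ Ideal.span {a, b})
    (ha : aeval T a v = 0) (hb : aeval T b v = 0) : aeval T p v = 0 := by
  obtain ⟨u, w, rfl⟩ := Ideal.mem_span_pair.1 hp
  simp [ha, hb]

theorem pow_smul_fwdDiff_eq_zero {h : G} {f : G → A} {d r : ℕ} (hf : (Δ_[h])^[d + 1] f = 0)
    (hr : Δ_[r • h] f = 0) : r ^ d • Δ_[h] f = 0 := by
  have := aeval_apply_eq_zero_of_mem_span_pair (T := fwdDiffₗ G A h) (v := f)
    (pow_mul_mem_span_one_add_pow_sub_one (X : ℤ[X]) r d)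
    (by rwa [aeval_fwdDiff_one_add_X_pow_sub_one]) (by rwa [aeval_fwdDiff_X_pow])
  rwa [map_mul, map_pow, map_natCast, aeval_X, ← Nat.cast_pow, Module.End.mul_apply,
    Module.End.natCast_apply] at this

theorem fwdDiff_pow_smul_eq_zero {h : G} {f : G → A} {d t : ℕ} (hf : (Δ_[h])^[d + 1] f = 0)
    (ht : t • Δ_[h] f = 0) : Δ_[t ^ d • h] f = 0 := by
  rw [← aeval_fwdDiff_one_add_X_pow_sub_one]
  exact aeval_apply_eq_zero_of_mem_span_pair (one_add_pow_pow_sub_one_mem_span (X : ℤ[X]) t d)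
    (by simpa [← coe_fwdDiffₗ] using ht) (by rwa [aeval_fwdDiff_X_pow])

end PeriodicDifferences

section PolynomialMap

variable {G A R : Type*} [AddCommGroup G] [AddCommGroup A] [CommRing R]

/-- A map between abelian groups is polynomial of degree at most `d` if every `(d + 1)`-fold
difference of it, with arbitrary increments, vanishes. -/
def IsPolynomialMap : ℕ → (G → A) → Prop
  | 0, f => ∀ x y, f x = f y
  | d + 1, f => ∀ h, IsPolynomialMap d (Δ_[h] f)

lemma fwdDiff_comm (h k : G) (f : G → A) : Δ_[h] (Δ_[k] f) = Δ_[k] (Δ_[h] f) := by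
  ext x
  simp only [fwdDiff, add_right_comm x h k]
  abel

namespace IsPolynomialMap

variable {d e : ℕ}

lemma const (a : A) : IsPolynomialMap d fun _ : G ↦ a := by
  induction d generalizing a with
  | zero => exact fun _ _ ↦ rfl
  | succ d ih => exact fun h ↦ fwdDiff_const h a ▸ ih 0

lemma succ {f : G → A} (hf : IsPolynomialMap d f) : IsPolynomialMap (d + 1) f := by
  induction d generalizing f with
  | zero =>
    intro h x y
    simp only [fwdDiff, hf _ 0, sub_self]
  | succ d ih => exact fun h ↦ ih (hf h)

lemma mono {f : G → A} (hf : IsPolynomialMap d f) (hde : d ≤ e) : IsPolynomialMap e f := by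
  induction hde with
  | refl => exact hf
  | step _ ih => exact ih.succ

lemma add {f g : G → A} (hf : IsPolynomialMap d f) (hg : IsPolynomialMap d g) :
    IsPolynomialMap d (f + g) := by
  induction d generalizing f g with
  | zero => exact fun x y ↦ congrArg₂ (· + ·) (hf x y) (hg x y)
  | succ d ih => exact fun h ↦ fwdDiff_add h f g ▸ ih (hf h) (hg h)

lemma iterate_fwdDiff_eq_zero {f : G → A} (hf : IsPolynomialMap d f) (h : G) :
    (Δ_[h])^[d + 1] f = 0 := by
  induction d generalizing f with
  | zero => exact funext fun x ↦ sub_eq_zero.2 (hf _ _)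
  | succ d ih => exact ih (hf h)

protected lemma fwdDiff {f : G → A} (hf : IsPolynomialMap d f) (h : G) :
    IsPolynomialMap d (Δ_[h] f) := by
  cases d with
  | zero => exact hf.succ h
  | succ d => exact (hf h).succ

lemma mul {f g : G → R} (hf : IsPolynomialMap d f) (hg : IsPolynomialMap e g) :
    IsPolynomialMap (d + e) (f * g) := by
  induction hn : d + e generalizing d e f g with
  | zero =>
    obtain ⟨rfl, rfl⟩ := Nat.add_eq_zero_iff.1 hn
    exact fun x y ↦ congrArg₂ (· * ·) (hf x y) (hg x y)
  | succ n ih =>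
    intro h
    have leibniz : Δ_[h] (f * g) = Δ_[h] f * (g + Δ_[h] g) + f * Δ_[h] g := by
      rw [mul_add, add_right_comm]
      exact fwdDiff_smul h f g
    rw [leibniz]
    refine add ?_ ?_
    · cases d with
      | zero =>
        rw [show Δ_[h] f = 0 from hf.iterate_fwdDiff_eq_zero h, zero_mul]
        exact const 0
      | succ d => exact ih (hf h) (hg.add (hg.fwdDiff h)) (by omega)
    · cases e with
      | zero =>
        rw [show Δ_[h] g = 0 from hg.iterate_fwdDiff_eq_zero h, mul_zero]
        exact const 0
      | succ e => exact ih hf (hg h) (by omega)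

lemma sum {ι : Type*} {s : Finset ι} {f : ι → G → A} (hf : ∀ i ∈ s, IsPolynomialMap d (f i)) :
    IsPolynomialMap d (∑ i ∈ s, f i) :=
  sum_induction f (IsPolynomialMap d) (fun _ _ ↦ add) (const 0) hf

lemma pow {f : G → R} (hf : IsPolynomialMap d f) (n : ℕ) : IsPolynomialMap (n * d) (f ^ n) := by
  induction n with
  | zero => exact pow_zero f ▸ const 1
  | succ n ih => exact pow_succ f n ▸ n.succ_mul d ▸ ih.mul hf

lemma prod {ι : Type*} {s : Finset ι} {f : ι → G → R} {d : ι → ℕ}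
    (hf : ∀ i ∈ s, IsPolynomialMap (d i) (f i)) :
    IsPolynomialMap (∑ i ∈ s, d i) (∏ i ∈ s, f i) := by
  classical
  induction s using Finset.induction_on with
  | empty => exact const 1
  | insert i s hi ih =>
    rw [sum_insert hi, prod_insert hi]
    exact (hf i (mem_insert_self i s)).mul (ih fun j hj ↦ hf j (mem_insert_of_mem hj))

lemma apply {ι : Type*} (i : ι) : IsPolynomialMap 1 fun x : ι → R ↦ x i := fun h x y ↦ by
  simp only [fwdDiff, Pi.add_apply, add_sub_cancel_left]

lemma eval {ι : Type*} {P : MvPolynomial ι R} (hP : P.totalDegree ≤ d) :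
    IsPolynomialMap d fun x : ι → R ↦ P.eval x := by
  have polynomial_monomial (m) (hm : m ∈ P.support) :
      IsPolynomialMap d fun x : ι → R ↦ P.coeff m * m.prod fun i n ↦ x i ^ n := by
    have := (const (d := 0) (G := ι → R) (P.coeff m)).mul
      (prod (s := m.support) fun i _ ↦ (apply (R := R) i).pow (m i))
    rw [zero_add] at this
    convert this.mono _ using 1
    · ext x
      simp [Finsupp.prod]
    · simpa [Finsupp.sum] using (MvPolynomial.le_totalDegree hm).trans hP
  convert sum polynomial_monomial using 1
  ext x
  simp only [MvPolynomial.eval_eq, Finset.sum_apply, Finsupp.prod]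

end IsPolynomialMap

end PolynomialMap

section OrderModConst

variable {G A : Type*} [AddCommGroup G] [AddCommGroup A] {f : G → A}

/-- The additive order of `f` modulo constant functions: the least positive `t` such that `t • f` is
constant, or `0` if there is none. -/
noncomputable def addOrderModConst (f : G → A) : ℕ :=
  addOrderOf fun x ↦ f x - f 0

lemma addOrderModConst_dvd_iff {t : ℕ} :
    addOrderModConst f ∣ t ↔ IsPolynomialMap 0 (t • f) := by
  have hconst : IsPolynomialMap 0 (t • f) ↔ ∀ x, t • f x = t • f 0 :=
    ⟨fun h x ↦ h x 0, fun h x y ↦ (h x).trans (h y).symm⟩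
  simp only [addOrderModConst, addOrderOf_dvd_iff_nsmul_eq_zero, funext_iff, Pi.smul_apply,
    Pi.zero_apply, smul_sub, sub_eq_zero, hconst]

lemma addOrderModConst_pos [Finite G] [Finite A] : 0 < addOrderModConst f :=
  addOrderOf_pos _

lemma addOrderModConst_fwdDiff_dvd (h : G) : addOrderModConst (Δ_[h] f) ∣ addOrderModConst f := by
  rw [addOrderModConst_dvd_iff, ← fwdDiff_const_smul]
  exact (addOrderModConst_dvd_iff.1 dvd_rfl).fwdDiff h

/-- The subgroup of those increments `h` for which the difference `Δ_[h] f` is constant. -/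
def constDiffSubgroup (f : G → A) : AddSubgroup G where
  carrier := {h | IsPolynomialMap 0 (Δ_[h] f)}
  zero_mem' x y := by simp only [fwdDiff, add_zero, sub_self]
  add_mem' {h k} hh hk := by
    have cocycle : Δ_[h + k] f = (fun x ↦ Δ_[h] f (x + k)) + Δ_[k] f := by
      ext x
      simp only [fwdDiff, Pi.add_apply, add_assoc, add_comm k h]
      abel
    change IsPolynomialMap 0 _
    rw [cocycle]
    exact .add (fun _ _ ↦ hh _ _) hk
  neg_mem' {h} hh x y := by
    simpa [fwdDiff, ← sub_eq_add_neg] using congrArg Neg.neg (hh (x - h) (y - h))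

lemma mem_constDiffSubgroup_smul_iff {t : ℕ} {h : G} :
    h ∈ constDiffSubgroup (t • f) ↔ addOrderModConst (Δ_[h] f) ∣ t := by
  rw [addOrderModConst_dvd_iff, ← fwdDiff_const_smul]
  rfl

lemma IsPolynomialMap.fwdDiff_smul_index {d : ℕ} (hf : IsPolynomialMap (d + 1) f) (t : ℕ) (h : G) :
    IsPolynomialMap 0 (Δ_[(t ^ d * (constDiffSubgroup (t • f)).index) • h] f) := by
  set I := (constDiffSubgroup (t • f)).index
  have const_diff : IsPolynomialMap 0 (Δ_[I • h] (t • f)) :=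
    (constDiffSubgroup (t • f)).nsmul_index_mem h
  have second_diff (k : G) : t • Δ_[I • h] (Δ_[k] f) = 0 := by
    rw [← fwdDiff_const_smul, ← fwdDiff_const_smul, fwdDiff_comm]
    exact const_diff.iterate_fwdDiff_eq_zero k
  intro x y
  have := congrFun (fwdDiff_pow_smul_eq_zero ((hf (x - y)).iterate_fwdDiff_eq_zero _)
    (second_diff (x - y))) y
  rw [fwdDiff_comm, ← mul_smul] at this
  simpa [sub_eq_zero, fwdDiff] using this

end OrderModConst

section ExponentialSum

variable {G : Type*} [Fintype G] {q : ℕ} [NeZero q]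

/-- The complete exponential sum of a phase function `f` with values in `ZMod q`. -/
noncomputable def expSum (f : G → ZMod q) : ℂ :=
  ∑ x, ZMod.stdAddChar (f x)

lemma norm_expSum_le_card (f : G → ZMod q) : ‖expSum f‖ ≤ Fintype.card G :=
  (norm_sum_le _ _).trans (by simp [AddChar.norm_apply])

variable [AddCommGroup G] {f : G → ZMod q} {d : ℕ}

lemma fwdDiff_eq_zero_of_expSum_ne_zero (hS : expSum f ≠ 0) {h : G}
    (hf : IsPolynomialMap 0 (Δ_[h] f)) : Δ_[h] f = 0 := by
  have shift_invariance : expSum f * ZMod.stdAddChar (Δ_[h] f 0) = expSum f := by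
    rw [expSum, sum_mul, ← Equiv.sum_comp (Equiv.addRight h) fun x ↦ ZMod.stdAddChar (f x)]
    refine sum_congr rfl fun x _ ↦ ?_
    rw [← AddChar.map_add_eq_mul, ← hf x 0, fwdDiff, add_sub_cancel, Equiv.coe_addRight]
  have h0 : Δ_[h] f 0 = 0 := ZMod.injective_stdAddChar <| by
    rw [AddChar.map_zero_eq_one, ← mul_eq_left₀ hS, shift_invariance]
  exact funext fun x ↦ (hf x 0).trans h0

theorem addOrderModConst_dvd_of_expSum_ne_zero (hf : IsPolynomialMap (d + 1) f)
    (hS : expSum f ≠ 0) (t : ℕ) :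
    addOrderModConst f ∣ (t ^ d * (constDiffSubgroup (t • f)).index) ^ (d + 1) := by
  set r := t ^ d * (constDiffSubgroup (t • f)).index
  have period (h : G) : Δ_[r • h] f = 0 :=
    fwdDiff_eq_zero_of_expSum_ne_zero hS (hf.fwdDiff_smul_index t h)
  rw [addOrderModConst, addOrderOf_dvd_iff_nsmul_eq_zero]
  ext h
  simpa [fwdDiff] using congrFun
    (pow_smul_fwdDiff_eq_zero (hf.iterate_fwdDiff_eq_zero h) (period h)) 0

lemma addOrderModConst_le_of_expSum_ne_zero (hf : IsPolynomialMap (d + 1) f)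
    (hS : expSum f ≠ 0) {t : ℕ} (ht : 0 < t) :
    addOrderModConst f ≤ (t * (constDiffSubgroup (t • f)).index) ^ (d + 1) ^ 2 := by
  set I := (constDiffSubgroup (t • f)).index
  have hI : 0 < I := Nat.pos_of_ne_zero AddSubgroup.index_ne_zero_of_finite
  calc addOrderModConst f ≤ (t ^ d * I) ^ (d + 1) :=
        Nat.le_of_dvd (by positivity) (addOrderModConst_dvd_of_expSum_ne_zero hf hS t)
    _ ≤ (t ^ (d + 1) * I ^ (d + 1)) ^ (d + 1) := by
        gcongr
        exacts [d.le_succ, Nat.le_pow d.succ_pos]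
    _ = (t * I) ^ (d + 1) ^ 2 := by rw [← mul_pow, ← pow_mul, sq]

lemma norm_expSum_sq_le (f : G → ZMod q) : ‖expSum f‖ ^ 2 ≤ ∑ h, ‖expSum (Δ_[h] f)‖ := by
  have weyl_differencing : expSum f * starRingEnd ℂ (expSum f) = ∑ h, expSum (Δ_[h] f) := by
    simp only [expSum, fwdDiff]
    rw [map_sum, mul_sum, sum_comm]
    refine sum_congr rfl fun x _ ↦ ?_
    rw [← Equiv.sum_comp (Equiv.addLeft x), sum_mul]
    simp only [Equiv.coe_addLeft, sub_eq_add_neg, AddChar.map_add_eq_mul, AddChar.map_neg_eq_conj]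
  calc ‖expSum f‖ ^ 2 = ‖expSum f * starRingEnd ℂ (expSum f)‖ := by
        rw [norm_mul, RCLike.norm_conj, sq]
    _ ≤ ∑ h, ‖expSum (Δ_[h] f)‖ := weyl_differencing ▸ norm_sum_le _ _

lemma card_addOrderModConst_fwdDiff_eq_mul_rpow_le (hf : IsPolynomialMap (d + 1) f)
    (hS : expSum f ≠ 0) {δ : ℝ} (hδ : 0 < δ) (hδ1 : δ ≤ 1) {t : ℕ} (ht : 0 < t) :
    #{h | addOrderModConst (Δ_[h] f) = t} * (t : ℝ) ^ (-δ) ≤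
      Fintype.card G * (addOrderModConst f : ℝ) ^ (-(δ / (d + 1) ^ 2)) := by
  set H := constDiffSubgroup (t • f)
  set Q := addOrderModConst f
  have hI : 0 < H.index := Nat.pos_of_ne_zero AddSubgroup.index_ne_zero_of_finite
  have hQ : 0 < Q := addOrderModConst_pos
  have fiber_le : #{h | addOrderModConst (Δ_[h] f) = t} ≤ Nat.card H := by
    classical
    rw [Nat.card_eq_fintype_card, Fintype.card_subtype]
    exact card_le_card fun h hh ↦ mem_filter.2 ⟨mem_univ h,
      mem_constDiffSubgroup_smul_iff.2 (mem_filter.1 hh).2.dvd⟩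
  have index_le : 1 ≤ (H.index : ℝ) * (H.index : ℝ) ^ (-δ) := by
    rw [Real.rpow_neg (by positivity), ← div_eq_mul_inv, one_le_div (by positivity)]
    exact Real.rpow_le_self_of_one_le (mod_cast hI) hδ1
  calc #{h | addOrderModConst (Δ_[h] f) = t} * (t : ℝ) ^ (-δ)
      ≤ Nat.card H * (t : ℝ) ^ (-δ) := by gcongr
    _ ≤ Nat.card H * (t : ℝ) ^ (-δ) * (H.index * (H.index : ℝ) ^ (-δ)) :=
        le_mul_of_one_le_right (by positivity) index_le
    _ = Fintype.card G * (t * H.index : ℝ) ^ (-δ) := by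
        rw [← Nat.card_eq_fintype_card, ← H.card_mul_index, Real.mul_rpow (by positivity)
          (by positivity)]
        push_cast
        ring
    _ = Fintype.card G * (((t * H.index) ^ (d + 1) ^ 2 : ℕ) : ℝ) ^ (-(δ / (d + 1) ^ 2)) := by
        push_cast
        rw [← Real.rpow_natCast, ← Real.rpow_mul (by positivity)]
        congr 2
        push_cast
        field_simp
    _ ≤ Fintype.card G * (Q : ℝ) ^ (-(δ / (d + 1) ^ 2)) := by
        gcongr ?_ * ?_
        exact Real.rpow_le_rpow_of_nonpos (mod_cast hQ)
          (mod_cast addOrderModConst_le_of_expSum_ne_zero hf hS ht) (neg_nonpos.2 (by positivity))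

lemma norm_expSum_sq_le_of_fwdDiff (hf : IsPolynomialMap (d + 1) f) (hS : expSum f ≠ 0)
    {δ C : ℝ} (hδ : 0 < δ) (hδ1 : δ ≤ 1) (hC : 0 ≤ C)
    (hbound : ∀ h, ‖expSum (Δ_[h] f)‖ ≤
      C * Fintype.card G * (addOrderModConst (Δ_[h] f) : ℝ) ^ (-δ)) :
    ‖expSum f‖ ^ 2 ≤ C * Fintype.card G ^ 2 * #(addOrderModConst f).divisors *
      (addOrderModConst f : ℝ) ^ (-(δ / (d + 1) ^ 2)) := by
  set Q := addOrderModConst f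
  have hQ : Q ≠ 0 := addOrderModConst_pos.ne'
  have maps_to : ∀ h ∈ univ, addOrderModConst (Δ_[h] f) ∈ Q.divisors := fun h _ ↦
    Nat.mem_divisors.2 ⟨addOrderModConst_fwdDiff_dvd h, hQ⟩
  calc ‖expSum f‖ ^ 2 ≤ ∑ h, ‖expSum (Δ_[h] f)‖ := norm_expSum_sq_le f
    _ ≤ ∑ h, C * Fintype.card G * (addOrderModConst (Δ_[h] f) : ℝ) ^ (-δ) :=
        sum_le_sum fun h _ ↦ hbound h
    _ = C * Fintype.card G *
          ∑ t ∈ Q.divisors, #{h | addOrderModConst (Δ_[h] f) = t} * (t : ℝ) ^ (-δ) := by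
        rw [← mul_sum, ← sum_fiberwise_of_maps_to maps_to]
        congr 1
        refine sum_congr rfl fun t _ ↦ ?_
        rw [sum_congr rfl fun h hh ↦ by rw [(mem_filter.1 hh).2], sum_const, nsmul_eq_mul]
    _ ≤ C * Fintype.card G * ∑ t ∈ Q.divisors,
          Fintype.card G * (Q : ℝ) ^ (-(δ / (d + 1) ^ 2)) := by
        gcongr ?_ * ?_
        exact sum_le_sum fun t ht ↦ card_addOrderModConst_fwdDiff_eq_mul_rpow_le hf hS hδ hδ1
          (Nat.pos_of_mem_divisors ht)
    _ = _ := by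
        rw [sum_const, nsmul_eq_mul]
        ring

theorem exists_norm_expSum_le (d : ℕ) :
    ∃ δ : ℝ, 0 < δ ∧ δ ≤ 1 ∧ ∃ C : ℝ, 1 ≤ C ∧
      ∀ (G : Type*) [AddCommGroup G] [Fintype G] (q : ℕ) [NeZero q] (f : G → ZMod q),
        IsPolynomialMap d f →
          ‖expSum f‖ ≤ C * Fintype.card G * (addOrderModConst f : ℝ) ^ (-δ) := by
  induction d with
  | zero =>
    refine ⟨1, one_pos, le_rfl, 1, le_rfl, fun G _ _ q _ f hf ↦ ?_⟩
    have order_eq_one : addOrderModConst f = 1 :=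
      Nat.dvd_one.1 (addOrderModConst_dvd_iff.2 (by rwa [one_smul]))
    simpa [order_eq_one] using norm_expSum_le_card f
  | succ d ih =>
    obtain ⟨δ, hδ, hδ1, C, hC, hbound⟩ := ih
    set η := δ / (d + 1) ^ 2
    have hη : 0 < η := by positivity
    have hη1 : η ≤ 1 := div_le_one_of_le₀ (hδ1.trans (one_le_pow₀ (by simp))) (by positivity)
    obtain ⟨K, hK, hdivisors⟩ := exists_card_divisors_le (half_pos hη)
    have hCK : 1 ≤ C * K := one_le_mul_of_one_le_of_one_le hC hK
    refine ⟨η / 4, by positivity, by linarith, C * K, hCK, fun G _ _ q _ f hf ↦ ?_⟩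
    rcases eq_or_ne (expSum f) 0 with hS | hS
    · rw [hS, norm_zero]
      positivity
    set Q := addOrderModConst f
    have hQ : 0 < Q := addOrderModConst_pos
    refine le_of_sq_le_sq ?_ (by positivity)
    calc ‖expSum f‖ ^ 2 ≤ C * Fintype.card G ^ 2 * #Q.divisors * (Q : ℝ) ^ (-η) :=
          norm_expSum_sq_le_of_fwdDiff hf hS hδ hδ1 (by positivity) fun h ↦ hbound G q _ (hf h)
      _ ≤ C * Fintype.card G ^ 2 * (K * (Q : ℝ) ^ (η / 2)) * (Q : ℝ) ^ (-η) := by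
          gcongr
          exact hdivisors Q hQ.ne'
      _ = C * K * (Fintype.card G * (Q : ℝ) ^ (-(η / 4))) ^ 2 := by
          have exponents : -η = -(η / 2) + -(η / 4) * (2 : ℕ) := by push_cast; ring
          rw [mul_pow, ← Real.rpow_mul_natCast (by positivity), exponents,
            Real.rpow_add (mod_cast hQ), Real.rpow_neg (by positivity)]
          field_simp
      _ ≤ (C * K) ^ 2 * (Fintype.card G * (Q : ℝ) ^ (-(η / 4))) ^ 2 := by
          gcongr
          exact le_self_pow₀ hCK two_ne_zero
      _ = _ := by ring

end ExponentialSum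

section CoefficientExtraction

lemma sum_adjugate_vandermonde_mul_pow (R : Type*) [CommRing R] {D : ℕ} (a b : Fin (D + 1)) :
    ∑ j, (Matrix.vandermonde fun i : Fin (D + 1) ↦ (i : R)).adjugate a j * (j : R) ^ (b : ℕ) =
      if a = b then (D.superFactorial : R) else 0 := by
  have := congrFun₂ (Matrix.adjugate_mul (Matrix.vandermonde fun i : Fin (D + 1) ↦ (i : R))) a b
  rwa [Matrix.det_vandermonde_id_eq_superFactorial, Matrix.mul_apply, Matrix.smul_apply,
    Matrix.one_apply, smul_eq_mul, mul_ite, mul_one, mul_zero] at this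

variable {ι R : Type*} [Fintype ι] [CommRing R]

theorem superFactorial_pow_mul_coeff_eq_zero {P : MvPolynomial ι R} {D : ℕ}
    (hP : P.totalDegree ≤ D) (hzero : ∀ x, P.eval x = 0) (m : ι →₀ ℕ) :
    (D.superFactorial : R) ^ Fintype.card ι * P.coeff m = 0 := by
  classical
  by_cases hm : m ∈ P.support
  swap
  · rw [MvPolynomial.notMem_support_iff.1 hm, mul_zero]
  have exponent_lt {n} (hn : n ∈ P.support) (i : ι) : n i < D + 1 :=
    Nat.lt_succ_of_le ((n.le_degree i).trans ((MvPolynomial.le_totalDegree hn).trans hP))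
  let w (i : ι) : Fin (D + 1) → R :=
    (Matrix.vandermonde fun j ↦ (j : R)).adjugate ⟨m i, exponent_lt hm i⟩
  have extract_monomial {n} (hn : n ∈ P.support) :
      ∑ v : ι → Fin (D + 1), (∏ i, w i (v i)) * ∏ i, (v i : R) ^ n i =
        if n = m then (D.superFactorial : R) ^ Fintype.card ι else 0 := by
    simp only [← prod_mul_distrib]
    rw [← Fintype.prod_sum fun i j ↦ w i j * (j : R) ^ n i,
      prod_congr rfl fun i _ ↦
        sum_adjugate_vandermonde_mul_pow R ⟨m i, _⟩ ⟨n i, exponent_lt hn i⟩, prod_ite_zero]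
    simp [Fin.ext_iff, Finsupp.ext_iff, eq_comm]
  calc (D.superFactorial : R) ^ Fintype.card ι * P.coeff m
      = ∑ n ∈ P.support, P.coeff n *
          ∑ v : ι → Fin (D + 1), (∏ i, w i (v i)) * ∏ i, (v i : R) ^ n i := by
        rw [sum_congr rfl fun n hn ↦ by rw [extract_monomial hn]]
        simp [hm, mul_comm]
    _ = ∑ v : ι → Fin (D + 1), (∏ i, w i (v i)) * P.eval (fun i ↦ (v i : R)) := by
        simp only [MvPolynomial.eval_eq', mul_sum]
        rw [sum_comm]
        exact sum_congr rfl fun _ _ ↦ sum_congr rfl fun _ _ ↦ mul_left_comm ..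
    _ = 0 := by simp only [hzero, mul_zero, sum_const_zero]

/-- The polynomial `P (c₁ X₁, …, cₖ Xₖ)`, for a vector `c` of dilation factors. -/
noncomputable def dilate (c : ι → R) (P : MvPolynomial ι R) : MvPolynomial ι R :=
  ∑ m ∈ P.support, MvPolynomial.monomial m ((∏ i, c i ^ m i) * P.coeff m)

lemma coeff_dilate (c : ι → R) (P : MvPolynomial ι R) (m : ι →₀ ℕ) :
    (dilate c P).coeff m = (∏ i, c i ^ m i) * P.coeff m := by
  classical
  simp +contextual [dilate, MvPolynomial.coeff_sum, MvPolynomial.coeff_monomial]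

lemma eval_dilate (c : ι → R) (P : MvPolynomial ι R) (x : ι → R) :
    (dilate c P).eval x = P.eval (c * x) := by
  rw [dilate, map_sum, MvPolynomial.eval_eq']
  refine sum_congr rfl fun m _ ↦ ?_
  simp only [MvPolynomial.eval_monomial, Finsupp.prod_pow, Pi.mul_apply, mul_pow, prod_mul_distrib]
  ring

lemma totalDegree_dilate_le (c : ι → R) (P : MvPolynomial ι R) :
    (dilate c P).totalDegree ≤ P.totalDegree :=
  MvPolynomial.totalDegree_le_of_support_subset fun m hm ↦ by
    rw [MvPolynomial.mem_support_iff, coeff_dilate] at hm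
    exact MvPolynomial.mem_support_iff.2 (right_ne_zero_of_mul hm)

lemma superFactorial_pow_mul_addOrderModConst_mul_coeff_eq_zero {P : MvPolynomial ι R} {D : ℕ}
    (hP : P.totalDegree ≤ D) {m : ι →₀ ℕ} (hm : m ≠ 0) :
    (D.superFactorial : R) ^ Fintype.card ι * addOrderModConst (fun x ↦ P.eval x) * P.coeff m =
      0 := by
  classical
  set Q := addOrderModConst fun x ↦ P.eval x
  have hconst : IsPolynomialMap 0 (Q • fun x ↦ P.eval x) := addOrderModConst_dvd_iff.1 dvd_rfl
  have := superFactorial_pow_mul_coeff_eq_zero (P := (Q : R) • (P - .C (P.eval 0)))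
    ((MvPolynomial.totalDegree_smul_le _ _).trans
      ((MvPolynomial.totalDegree_sub_C_le _ _).trans hP))
    (fun x ↦ by simpa [MvPolynomial.smul_eval, mul_sub, sub_eq_zero] using hconst x 0) m
  simpa [MvPolynomial.coeff_smul, MvPolynomial.coeff_C, hm.symm, mul_assoc] using this

end CoefficientExtraction

section DilatedSum

variable {ι : Type*} [Fintype ι] {q : ℕ} {P : MvPolynomial ι (ZMod q)} {D : ℕ}

lemma dvd_superFactorial_pow_mul_addOrderModConst_dilate (hP : P.totalDegree ≤ D)
    (hcoeff : Ideal.span (P.coeff '' {0}ᶜ) = ⊤) (c : ι → ℕ) :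
    q ∣ D.superFactorial ^ Fintype.card ι *
      addOrderModConst (fun x ↦ (dilate (fun i ↦ (c i : ZMod q)) P).eval x) * (∏ i, c i) ^ D := by
  set Q := addOrderModConst fun x ↦ (dilate (fun i ↦ (c i : ZMod q)) P).eval x
  rw [← CharP.cast_eq_zero_iff (ZMod q) q]
  set z : ZMod q := ((D.superFactorial ^ Fintype.card ι * Q * (∏ i, c i) ^ D : ℕ) : ZMod q)
  have kills_coeff {m : ι →₀ ℕ} (hm : m ≠ 0) : z * P.coeff m = 0 := by
    by_cases hmP : m ∈ P.support
    swap
    · rw [MvPolynomial.notMem_support_iff.1 hmP, mul_zero]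
    have factor_dvd : ∏ i, (c i : ZMod q) ^ m i ∣ (∏ i, (c i : ZMod q)) ^ D := by
      rw [← prod_pow]
      exact prod_dvd_prod_of_dvd _ _ fun i _ ↦ pow_dvd_pow _
        ((m.le_degree i).trans ((MvPolynomial.le_totalDegree hmP).trans hP))
    obtain ⟨w, hw⟩ := factor_dvd
    have := superFactorial_pow_mul_addOrderModConst_mul_coeff_eq_zero
      ((totalDegree_dilate_le (fun i ↦ (c i : ZMod q)) P).trans hP) hm
    rw [coeff_dilate] at this
    simp only [z]
    push_cast
    rw [hw]
    linear_combination w * this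
  have one_mem : (1 : ZMod q) ∈ Ideal.span (P.coeff '' {0}ᶜ) := hcoeff ▸ Submodule.mem_top
  rw [← mul_one z]
  refine Submodule.span_induction (p := fun y _ ↦ z * y = 0) ?_ (mul_zero z)
    (fun a b _ _ ha hb ↦ by rw [mul_add, ha, hb, add_zero])
    (fun a b _ hb ↦ by rw [smul_eq_mul, mul_left_comm, hb, mul_zero]) one_mem
  rintro _ ⟨m, hm, rfl⟩
  exact kills_coeff hm

lemma rpow_neg_le_of_le_mul_pow {δ : ℝ} (hδ : 0 < δ) (hδ1 : δ ≤ 1) {s N Q q : ℕ} (hs : 0 < s)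
    (hN : 0 < N) (hQ : 0 < Q) (hq : 0 < q) (h : q ≤ s * Q * N ^ D) :
    (Q : ℝ) ^ (-δ) ≤ s * N * (q : ℝ) ^ (-(δ / (D + 1))) := by
  set η := δ / (D + 1)
  have hη : 0 < η := by positivity
  have hηδ : η ≤ δ := div_le_self hδ.le (by simp)
  have hDη : D * η ≤ 1 := by
    rw [mul_div_assoc', div_le_one (by positivity)]
    nlinarith [D.cast_nonneg (α := ℝ)]
  have key : (q : ℝ) ^ η ≤ s * N * (Q : ℝ) ^ δ :=
    calc (q : ℝ) ^ η ≤ (s * Q * (N : ℝ) ^ D) ^ η :=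
          Real.rpow_le_rpow q.cast_nonneg (mod_cast h) hη.le
      _ = (s : ℝ) ^ η * (N : ℝ) ^ (D * η) * (Q : ℝ) ^ η := by
          rw [Real.mul_rpow (by positivity) (by positivity), Real.mul_rpow (by positivity)
            (by positivity), Real.rpow_mul N.cast_nonneg, Real.rpow_natCast]
          ring
      _ ≤ s * N * (Q : ℝ) ^ δ := by
          gcongr
          · exact Real.rpow_le_self_of_one_le (mod_cast hs) (hηδ.trans hδ1)
          · exact Real.rpow_le_self_of_one_le (mod_cast hN) hDη
          · exact mod_cast hQ
  rw [Real.rpow_neg q.cast_nonneg, Real.rpow_neg Q.cast_nonneg, ← div_eq_mul_inv,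
    le_div_iff₀ (by positivity), ← div_eq_inv_mul, div_le_iff₀ (by positivity)]
  exact key

variable (ι) in
theorem exists_norm_expSum_dilated_le [DecidableEq ι] (D : ℕ) :
    ∃ η : ℝ, 0 < η ∧ ∃ C : ℝ, 1 ≤ C ∧
      ∀ (q : ℕ) [NeZero q] (P : MvPolynomial ι (ZMod q)), P.totalDegree ≤ D →
        Ideal.span (P.coeff '' {0}ᶜ) = ⊤ → ∀ c : ι → ℕ, (∀ i, 0 < c i) →
          ‖expSum fun x : ι → ZMod q ↦ P.eval fun i ↦ c i * x i‖ ≤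
            C * (∏ i, c i : ℕ) * (q : ℝ) ^ Fintype.card ι * (q : ℝ) ^ (-η) := by
  obtain ⟨δ, hδ, hδ1, C, hC, hbound⟩ := exists_norm_expSum_le D
  set s := D.superFactorial ^ Fintype.card ι
  have hs : 0 < s :=
    pow_pos (Nat.prod_Icc_factorial D ▸ prod_pos fun i _ ↦ i.factorial_pos) _
  refine ⟨δ / (D + 1), by positivity, C * s, ?_, fun q _ P hP hcoeff c hc ↦ ?_⟩
  · exact one_le_mul_of_one_le_of_one_le hC (mod_cast hs)
  set f : (ι → ZMod q) → ZMod q := fun x ↦ (dilate (fun i ↦ (c i : ZMod q)) P).eval x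
  have hf : (fun x : ι → ZMod q ↦ P.eval fun i ↦ c i * x i) = f :=
    funext fun x ↦ (eval_dilate _ P x).symm
  have hN : 0 < ∏ i, c i := prod_pos fun i _ ↦ hc i
  have hQ : 0 < addOrderModConst f := addOrderModConst_pos
  have order_large := rpow_neg_le_of_le_mul_pow (D := D) hδ hδ1 hs hN hQ (NeZero.pos q)
    (Nat.le_of_dvd (Nat.mul_pos (Nat.mul_pos hs hQ) (pow_pos hN D))
      (dvd_superFactorial_pow_mul_addOrderModConst_dilate hP hcoeff c))
  calc ‖expSum _‖ = ‖expSum f‖ := by rw [hf]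
    _ ≤ C * Fintype.card (ι → ZMod q) * (addOrderModConst f : ℝ) ^ (-δ) :=
        hbound _ q f (.eval ((totalDegree_dilate_le _ P).trans hP))
    _ ≤ C * Fintype.card (ι → ZMod q) *
          (s * (∏ i, c i : ℕ) * (q : ℝ) ^ (-(δ / (D + 1)))) := by gcongr
    _ = _ := by
        rw [Fintype.card_fun, ZMod.card]
        push_cast
        ring

end DilatedSum

section UnitSums

variable {ι : Type*} [Fintype ι]

lemma norm_prod_moebius_div_le (c : ι → ℕ) :
    ‖∏ i, (ArithmeticFunction.moebius (c i) : ℂ) / c i‖ ≤ ((∏ i, c i : ℕ) : ℝ)⁻¹ := by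
  rw [norm_prod, Nat.cast_prod, ← prod_inv_distrib]
  refine prod_le_prod (fun _ _ ↦ norm_nonneg _) fun i _ ↦ ?_
  rw [norm_div, Complex.norm_natCast, Complex.norm_intCast, ← one_div]
  gcongr
  exact mod_cast ArithmeticFunction.abs_moebius_le_one

lemma card_piFinset_ite_divisors [DecidableEq ι] (q : ℕ) (U : Finset ι) :
    #(Fintype.piFinset fun i ↦ if i ∈ U then q.divisors else {1}) = #q.divisors ^ #U := by
  simp only [Fintype.card_piFinset, apply_ite card, card_singleton, prod_ite_mem, univ_inter,
    prod_const]

variable {q : ℕ} [NeZero q]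

lemma natCast_dvd_iff_dvd_val {d : ℕ} (hd : d ∣ q) (y : ZMod q) :
    (d : ZMod q) ∣ y ↔ d ∣ y.val := by
  constructor
  · rintro ⟨z, rfl⟩
    rw [← ZMod.natCast_eq_zero_iff, ← map_natCast (ZMod.castHom hd (ZMod d)),
      ZMod.natCast_zmod_val, map_mul, map_natCast, ZMod.natCast_self, zero_mul]
  · intro h
    have := Nat.cast_dvd_cast (α := ZMod q) h
    rwa [ZMod.natCast_zmod_val] at this

lemma card_natCast_mul_eq {d : ℕ} (hd : d ∣ q) (y : ZMod q) :
    #{z : ZMod q | d * z = y} = if d ∣ y.val then d else 0 := by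
  split_ifs with hy <;> rw [← natCast_dvd_iff_dvd_val hd] at hy
  · have fiber_eq_ker : #{z : ZMod q | d • z = y} = #{z : ZMod q | d • z = 0} :=
      AddMonoidHom.card_fiber_eq_of_mem_range (nsmulAddMonoidHom (α := ZMod q) d)
        (by obtain ⟨z, rfl⟩ := hy; exact ⟨z, nsmul_eq_mul d z⟩) ⟨0, smul_zero d⟩
    have ker_card := IsAddCyclic.card_nsmulAddMonoidHom_ker (G := ZMod q) d
    rw [Nat.card_zmod, Nat.gcd_eq_right hd, Nat.card_eq_fintype_card, Fintype.card_subtype]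
      at ker_card
    simp only [← nsmul_eq_mul]
    rw [fiber_eq_ker]
    simpa only [AddMonoidHom.mem_ker, nsmulAddMonoidHom_apply] using ker_card
  · rw [card_eq_zero, filter_eq_empty_iff]
    exact fun z _ hz ↦ hy ⟨z, hz.symm⟩

lemma sum_moebius_div_mul_sum_ite_eq (y : ZMod q) :
    ∑ d ∈ q.divisors, (ArithmeticFunction.moebius d : ℂ) / d *
      ∑ z : ZMod q, (if d * z = y then 1 else 0) = if IsUnit y then 1 else 0 := by
  have sum_fiber {d : ℕ} (hd : d ∈ q.divisors) :
      (ArithmeticFunction.moebius d : ℂ) / d * ∑ z : ZMod q, (if d * z = y then 1 else 0) =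
        if d ∣ y.val then (ArithmeticFunction.moebius d : ℂ) else 0 := by
    have hd0 : (d : ℂ) ≠ 0 := mod_cast (Nat.pos_of_mem_divisors hd).ne'
    rw [sum_boole, card_natCast_mul_eq (Nat.dvd_of_mem_divisors hd)]
    split_ifs
    · exact div_mul_cancel₀ _ hd0
    · rw [Nat.cast_zero, mul_zero]
  have common_divisors : {d ∈ q.divisors | d ∣ y.val} = (y.val.gcd q).divisors := by
    ext d
    simp [Nat.dvd_gcd_iff, NeZero.ne q, and_comm]
  have unit_iff : IsUnit y ↔ y.val.gcd q = 1 := by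
    conv_lhs => rw [← ZMod.natCast_zmod_val y]
    exact ZMod.isUnit_iff_coprime _ _
  rw [sum_congr rfl fun d hd ↦ sum_fiber hd, ← sum_filter, common_divisors, ← Int.cast_sum,
    ← ArithmeticFunction.coe_mul_zeta_apply, ArithmeticFunction.moebius_mul_coe_zeta,
    ArithmeticFunction.one_apply]
  simp [unit_iff]

variable [DecidableEq ι]

theorem sum_isUnit_eq_sum_moebius (U : Finset ι) (F : (ι → ZMod q) → ℂ) :
    ∑ x with ∀ i ∈ U, IsUnit (x i), F x =
      ∑ c ∈ Fintype.piFinset fun i ↦ if i ∈ U then q.divisors else {1},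
        (∏ i, (ArithmeticFunction.moebius (c i) : ℂ) / c i) *
          ∑ z : ι → ZMod q, F fun i ↦ c i * z i := by
  have indicator (x : ι → ZMod q) (i : ι) :
      (if i ∈ U → IsUnit (x i) then (1 : ℂ) else 0) =
        ∑ d ∈ if i ∈ U then q.divisors else {1}, (ArithmeticFunction.moebius d : ℂ) / d *
          ∑ z : ZMod q, (if d * z = x i then 1 else 0) := by
    by_cases hi : i ∈ U
    · simp only [hi, if_true, sum_moebius_div_mul_sum_ite_eq, true_imp_iff]
    · simp [hi, sum_boole, filter_eq']
  have expand (x : ι → ZMod q) : (if ∀ i ∈ U, IsUnit (x i) then (1 : ℂ) else 0) =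
      ∑ c ∈ Fintype.piFinset fun i ↦ if i ∈ U then q.divisors else {1},
        (∏ i, (ArithmeticFunction.moebius (c i) : ℂ) / c i) *
          ∑ z : ι → ZMod q, if (fun i ↦ c i * z i) = x then 1 else 0 := by
    rw [← Fintype.prod_boole]
    simp only [indicator, prod_univ_sum, prod_mul_distrib, Fintype.piFinset_univ,
      Fintype.prod_boole, funext_iff]
  calc ∑ x with ∀ i ∈ U, IsUnit (x i), F x
      = ∑ x, (if ∀ i ∈ U, IsUnit (x i) then 1 else 0) * F x := by
        simp only [sum_filter, ite_mul, one_mul, zero_mul]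
    _ = ∑ c ∈ Fintype.piFinset fun i ↦ if i ∈ U then q.divisors else {1},
          ∑ z : ι → ZMod q, ∑ x, (∏ i, (ArithmeticFunction.moebius (c i) : ℂ) / c i) *
            ((if (fun i ↦ c i * z i) = x then 1 else 0) * F x) := by
        simp only [expand, sum_mul, mul_sum, mul_assoc]
        rw [sum_comm]
        exact sum_congr rfl fun c _ ↦ sum_comm
    _ = _ := by simp only [ite_mul, one_mul, zero_mul, ← mul_sum, sum_ite_eq, mem_univ, if_true]

theorem norm_sum_isUnit_le (U : Finset ι) (F : (ι → ZMod q) → ℂ) {B : ℝ}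
    (hF : ∀ c : ι → ℕ, (∀ i, 0 < c i) →
      ‖∑ z : ι → ZMod q, F fun i ↦ c i * z i‖ ≤ (∏ i, c i : ℕ) * B) :
    ‖∑ x with ∀ i ∈ U, IsUnit (x i), F x‖ ≤ #q.divisors ^ #U * B := by
  rw [sum_isUnit_eq_sum_moebius]
  refine (norm_sum_le_of_le (n := fun _ ↦ B) _ fun c hc ↦ ?_).trans_eq ?_
  · have c_pos (i : ι) : 0 < c i := by
      have := Fintype.mem_piFinset.1 hc i
      split_ifs at this
      · exact Nat.pos_of_mem_divisors this
      · exact (mem_singleton.1 this).symm ▸ one_pos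
    have prod_ne : ((∏ i, c i : ℕ) : ℝ) ≠ 0 := mod_cast (prod_pos fun i _ ↦ c_pos i).ne'
    rw [norm_mul]
    calc _ ≤ ((∏ i, c i : ℕ) : ℝ)⁻¹ * ((∏ i, c i : ℕ) * B) := by
          gcongr
          exacts [norm_prod_moebius_div_le c, hF c c_pos]
      _ = B := inv_mul_cancel_left₀ prod_ne B
  · rw [sum_const, card_piFinset_ite_divisors, nsmul_eq_mul, Nat.cast_pow]

end UnitSums

section NormalizedSum

/-- The normalized Gaussian sum of a polynomial `P` over `ℤ/q`, in which the variables in `U` run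
over the units and the others over all of `ℤ/q`. -/
noncomputable def polyGaussSum {ι : Type*} [Fintype ι] [DecidableEq ι] {q : ℕ} [NeZero q]
    (P : MvPolynomial ι (ZMod q)) (U : Finset ι) : ℂ :=
  ((q : ℂ) ^ #Uᶜ * (q.totient : ℂ) ^ #U)⁻¹ *
    ∑ x with ∀ i ∈ U, IsUnit (x i), ZMod.stdAddChar (P.eval x)

lemma inv_pow_mul_totient_pow_le {q : ℕ} (hq : 0 < q) (m n : ℕ) :
    ((q : ℝ) ^ m * (q.totient : ℝ) ^ n)⁻¹ ≤ #q.divisors ^ n * ((q : ℝ) ^ (m + n))⁻¹ := by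
  have : 0 < q.totient := Nat.totient_pos.2 hq
  rw [inv_le_iff_one_le_mul₀ (by positivity)]
  have pow_le : (q : ℝ) ^ n ≤ (#q.divisors * q.totient : ℝ) ^ n := by
    gcongr
    exact mod_cast le_card_divisors_mul_totient q
  calc (1 : ℝ) = (q : ℝ) ^ m * (q : ℝ) ^ n * ((q : ℝ) ^ (m + n))⁻¹ := by
        rw [← pow_add, mul_inv_cancel₀ (by positivity)]
    _ ≤ (q : ℝ) ^ m * (#q.divisors * q.totient : ℝ) ^ n * ((q : ℝ) ^ (m + n))⁻¹ := by gcongr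
    _ = _ := by ring

theorem gauss_sum_estimate_general (ι : Type*) [Fintype ι] [DecidableEq ι] (D : ℕ) :
    ∃ δ : ℝ, 0 < δ ∧ ∃ C : ℝ, 0 < C ∧
      ∀ (q : ℕ) [NeZero q] (P : MvPolynomial ι (ZMod q)) (U : Finset ι), P.totalDegree ≤ D →
        Ideal.span (P.coeff '' {0}ᶜ) = ⊤ →
          ‖polyGaussSum P U‖ ≤ C * (q : ℝ) ^ (-δ) := by
  obtain ⟨η, hη, C, hC, hbound⟩ := exists_norm_expSum_dilated_le ι D
  set k := Fintype.card ι
  obtain ⟨K, hK, hdivisors⟩ := exists_card_divisors_pow_le (2 * k) (half_pos hη)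
  refine ⟨η / 2, half_pos hη, C * K, by positivity, fun q _ P U hP hcoeff ↦ ?_⟩
  have hq : 0 < q := NeZero.pos q
  have sum_bound : ‖∑ x with ∀ i ∈ U, IsUnit (x i), ZMod.stdAddChar (P.eval x)‖ ≤
      #q.divisors ^ #U * (C * (q : ℝ) ^ k * (q : ℝ) ^ (-η)) :=
    norm_sum_isUnit_le U _ fun c hc ↦ (hbound q P hP hcoeff c hc).trans_eq (by ring)
  rw [polyGaussSum, norm_mul, norm_inv, norm_mul, norm_pow, norm_pow, Complex.norm_natCast,
    Complex.norm_natCast]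
  calc _ ≤ #q.divisors ^ #U * ((q : ℝ) ^ (#Uᶜ + #U))⁻¹ *
          (#q.divisors ^ #U * (C * (q : ℝ) ^ k * (q : ℝ) ^ (-η))) := by
        gcongr
        exact inv_pow_mul_totient_pow_le hq _ _
    _ = C * #q.divisors ^ (2 * #U) * (q : ℝ) ^ (-η) := by
        rw [add_comm, card_add_card_compl]
        field_simp
        ring
    _ ≤ C * (K * (q : ℝ) ^ (η / 2)) * (q : ℝ) ^ (-η) := by
        gcongr
        exact hdivisors q hq.ne' _ (by gcongr; exact card_le_univ U)
    _ = C * K * (q : ℝ) ^ (-(η / 2)) := by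
        rw [show -(η / 2) = η / 2 + -η by ring, Real.rpow_add (mod_cast hq)]
        ring

end NormalizedSum

section GaussSum

variable {k : ℕ} {Γ : Finset (Fin k → ℕ)} {q : ℕ}

/-- The polynomial `a · 𝒬` over `ℤ/q`, whose exponential sum is the Gaussian sum `G(a/q)`. -/
noncomputable def gaussPoly (Γ : Finset (Fin k → ℕ)) (q : ℕ) (a : (Fin k → ℕ) → ℕ) :
    MvPolynomial (Fin k) (ZMod q) :=
  ∑ γ ∈ Γ, MvPolynomial.monomial (Finsupp.equivFunOnFinite.symm γ) (a γ : ZMod q)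

lemma coeff_gaussPoly (a : (Fin k → ℕ) → ℕ) {γ : Fin k → ℕ} (hγ : γ ∈ Γ) :
    (gaussPoly Γ q a).coeff (Finsupp.equivFunOnFinite.symm γ) = a γ := by
  simp [gaussPoly, MvPolynomial.coeff_sum, MvPolynomial.coeff_monomial, hγ]

lemma eval_gaussPoly (a : (Fin k → ℕ) → ℕ) (x : Fin k → ZMod q) :
    (gaussPoly Γ q a).eval x = ∑ γ ∈ Γ, a γ * ∏ i, x i ^ γ i := by
  simp [gaussPoly, MvPolynomial.eval_monomial, Finsupp.prod_fintype]

lemma totalDegree_gaussPoly_le (a : (Fin k → ℕ) → ℕ) :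
    (gaussPoly Γ q a).totalDegree ≤ Γ.sup fun γ ↦ ∑ i, γ i := by
  refine MvPolynomial.totalDegree_finsetSum_le fun γ hγ ↦
    (MvPolynomial.totalDegree_monomial_le _ _).trans ?_
  simpa [Finsupp.sum_fintype] using le_sup (f := fun γ : Fin k → ℕ ↦ ∑ i, γ i) hγ

lemma natCast_gcd_mem_span {α : Type*} (s : Finset α) (f : α → ℕ) (R : Type*) [CommRing R] :
    ((s.gcd f : ℕ) : R) ∈ Ideal.span ((fun i ↦ (f i : R)) '' s) := by
  classical
  induction s using Finset.induction_on with
  | empty => simp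
  | insert i s _ ih =>
    have bezout : ((Nat.gcd (f i) (s.gcd f) : ℕ) : R) =
        f i * (Nat.gcdA (f i) (s.gcd f) : R) + (s.gcd f : ℕ) * (Nat.gcdB (f i) (s.gcd f) : R) := by
      exact_mod_cast congrArg (Int.cast : ℤ → R) (Nat.gcd_eq_gcd_ab (f i) (s.gcd f))
    rw [gcd_insert, gcd_eq_nat_gcd, bezout]
    refine Ideal.add_mem _ (Ideal.mul_mem_right _ _ (Ideal.subset_span ⟨i, by simp, rfl⟩))
      (Ideal.mul_mem_right _ _ (Ideal.span_mono (Set.image_mono ?_) ih))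
    simp

lemma span_coeff_gaussPoly_eq_top (h0 : 0 ∉ Γ) {a : (Fin k → ℕ) → ℕ}
    (ha : (Γ.gcd a).gcd q = 1) : Ideal.span ((gaussPoly Γ q a).coeff '' {0}ᶜ) = ⊤ := by
  refine Ideal.eq_top_of_isUnit_mem _ (Ideal.span_mono ?_ (natCast_gcd_mem_span Γ a (ZMod q)))
    ((ZMod.isUnit_iff_coprime _ _).2 ha)
  rintro _ ⟨γ, hγ, rfl⟩
  refine ⟨Finsupp.equivFunOnFinite.symm γ, fun exponent_eq_zero ↦ ?_, coeff_gaussPoly a hγ⟩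
  obtain rfl : γ = 0 := (Equiv.symm_apply_eq _).1 exponent_eq_zero
  exact h0 hγ

variable [NeZero q]

lemma bijOn_natCast_Icc : Set.BijOn (Nat.cast : ℕ → ZMod q) (Set.Icc 1 q) Set.univ := by
  refine ⟨Set.mapsTo_univ _ _, fun m hm n hn hmn ↦ ?_, fun y _ ↦ ?_⟩
  · obtain ⟨m, rfl⟩ := Nat.exists_eq_add_of_le' hm.1
    obtain ⟨n, rfl⟩ := Nat.exists_eq_add_of_le' hn.1
    exact congrArg (· + 1) (CharP.natCast_injOn_Iio (ZMod q) q hm.2 hn.2 (by simpa using hmn))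
  · exact ⟨(y - 1).val + 1, ⟨Nat.le_add_left _ _, ZMod.val_lt _⟩, by simp⟩

lemma eC_eq_stdAddChar_eval_gaussPoly (a : (Fin k → ℕ) → ℕ) (v : Fin k → ℕ) :
    eC (∑ γ ∈ Γ, (a γ : ℝ) / q * ∏ i, (v i : ℝ) ^ γ i) =
      ZMod.stdAddChar ((gaussPoly Γ q a).eval fun i ↦ (v i : ZMod q)) := by
  have h := ZMod.stdAddChar_coe (N := q) ((∑ γ ∈ Γ, a γ * ∏ i, v i ^ γ i : ℕ) : ℤ)
  push_cast at h
  rw [eval_gaussPoly, h, eC, mul_div_assoc, sum_div]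
  push_cast
  simp only [div_mul_eq_mul_div]

lemma sum_piFinset_natCast_eq_sum_isUnit {ι : Type*} [Fintype ι] [DecidableEq ι]
    (U : Finset ι) (F : (ι → ZMod q) → ℂ) :
    ∑ v ∈ Fintype.piFinset fun i ↦ if i ∈ U then {m ∈ Icc 1 q | m.Coprime q} else Icc 1 q,
      F (fun i ↦ (v i : ZMod q)) = ∑ x with ∀ i ∈ U, IsUnit (x i), F x := by
  have mem_iff (v : ι → ℕ) :
      (v ∈ Fintype.piFinset fun i ↦ if i ∈ U then {m ∈ Icc 1 q | m.Coprime q} else Icc 1 q) ↔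
        (∀ i, v i ∈ Set.Icc 1 q) ∧ ∀ i ∈ U, IsUnit (v i : ZMod q) := by
    rw [Fintype.mem_piFinset, ← forall_and]
    refine forall_congr' fun i ↦ ?_
    rw [ZMod.isUnit_iff_coprime]
    split_ifs with hi <;> simp [hi]
  refine sum_nbij (fun v i ↦ (v i : ZMod q)) (fun v hv ↦ ?_) (fun v hv w hw hvw ↦ ?_)
    (fun x hx ↦ ?_) fun _ _ ↦ rfl
  · exact mem_filter.2 ⟨mem_univ _, ((mem_iff v).1 hv).2⟩
  · exact funext fun i ↦ bijOn_natCast_Icc.injOn (((mem_iff v).1 hv).1 i) (((mem_iff w).1 hw).1 i)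
      (congrFun hvw i)
  · choose v hv hvx using fun i ↦ bijOn_natCast_Icc.surjOn (Set.mem_univ (x i))
    obtain rfl : (fun i ↦ (v i : ZMod q)) = x := funext hvx
    exact ⟨v, (mem_iff v).2 ⟨hv, (mem_filter.1 hx).2⟩, rfl⟩

theorem gaussSumQ_eq_polyGaussSum {k' k'' : ℕ} (hk : k' + k'' = k) (a : (Fin k → ℕ) → ℕ) :
    gaussSumQ Γ k' k'' q a = polyGaussSum (gaussPoly Γ q a) {i | k' ≤ i} := by
  have card_compl : #({i | k' ≤ i} : Finset (Fin k))ᶜ = k' := by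
    simp only [compl_filter, not_le]
    rw [Fin.card_filter_val_lt]
    omega
  have card_eq : #({i | k' ≤ i} : Finset (Fin k)) = k'' := by
    have := card_add_card_compl ({i | k' ≤ i} : Finset (Fin k))
    rw [Fintype.card_fin] at this
    omega
  rw [polyGaussSum, card_compl, card_eq, ← sum_piFinset_natCast_eq_sum_isUnit, gaussSumQ]
  simp only [eC_eq_stdAddChar_eval_gaussPoly, mem_filter, mem_univ, true_and, ← not_lt, ite_not]

end GaussSum

/-- Gaussian sum estimate, [Troj, Theorem 3]: there is `δ > 0` such that
`|G(a/q)| ≲ q^{-δ}` for all `q ∈ ℕ` and all `a ∈ ℕ_q^Γ` with `gcd(a, q) = 1` (the tuple `a`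
together with `q` has greatest common divisor `1`). -/
theorem gauss_sum_estimate
    (k k' k'' : ℕ) (hk : k' + k'' = k)
    (Γ : Finset (Fin k → ℕ)) (hΓ : Γ.Nonempty) (h0 : (0 : Fin k → ℕ) ∉ Γ) :
    ∃ δ : ℝ, 0 < δ ∧ ∃ C : ℝ, 0 < C ∧
      ∀ q : ℕ, 0 < q → ∀ a : (Fin k → ℕ) → ℕ,
        (∀ γ ∈ Γ, a γ ∈ Finset.Icc 1 q) →
        Nat.gcd (Γ.gcd a) q = 1 →
        ‖gaussSumQ Γ k' k'' q a‖ ≤ C * (q : ℝ) ^ (-δ) := by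
  obtain ⟨δ, hδ, C, hC, bound⟩ := gauss_sum_estimate_general (Fin k) (Γ.sup fun γ ↦ ∑ i, γ i)
  refine ⟨δ, hδ, C, hC, fun q hq a _ ha ↦ ?_⟩
  have : NeZero q := ⟨hq.ne'⟩
  rw [gaussSumQ_eq_polyGaussSum hk]
  exact bound q _ _ (totalDegree_gaussPoly_le a) (span_coeff_gaussPoly_eq_top h0 ha)
end
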